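/- Consider the two-period time-dependent quantum walk on ℤ with coin sequence U_{2s} = H₀, U_{2s+1} = H₁, where H_γ = [[cos θ_γ, sin θ_γ], [sin θ_γ, −cos θ_γ]] for γ = 0,1, with θ_γ ≠ nπ/2 for all n ∈ ℤ and θ₀ ≠ θ₁. Then for every r ∈ ℕ, the r-th moment of X_{2t}/(2t) converges: lim_{t→∞} E((X_{2t}/2t)^r) = ∫_{−|c_ξ|}^{|c_ξ|} x^r f(x) dx, where |c_ξ| = min{|cos θ₀|, |cos θ₁|} and f(x) = f_K(x; c_ξ) · [1 − (|α|² − |β|² + (α·conj(β) + conj(α)·β)·(sin θ₀ / cos θ₀))·x]. -/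

import Mathlib

open MeasureTheory Complex Filter

noncomputable section

/-- The Konno density function `f_K(x; a)`; only `|a|` matters. -/
def konnoDensity (a x : ℝ) : ℝ :=
  if |x| < |a| then
    Real.sqrt (1 - |a| ^ 2) / (Real.pi * (1 - x ^ 2) * Real.sqrt (|a| ^ 2 - x ^ 2))
  else 0

/-- Time evolution of a time-dependent discrete-time quantum walk on `ℤ`:
`ψ_{t+1}(x) = P_t ψ_t(x+1) + Q_t ψ_t(x-1)`, where `P_t`/`Q_t` are the top/bottom
row parts of the coin `U t`. -/
def QWEvolves (U : ℕ → Matrix (Fin 2) (Fin 2) ℂ) (ψ : ℕ → ℤ → Fin 2 → ℂ) : Prop :=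
  ∀ t : ℕ, ∀ x : ℤ,
    ψ (t + 1) x 0 = U t 0 0 * ψ t (x + 1) 0 + U t 0 1 * ψ t (x + 1) 1 ∧
    ψ (t + 1) x 1 = U t 1 0 * ψ t (x - 1) 0 + U t 1 1 * ψ t (x - 1) 1

/-- Initial state `ψ₀(0) = ᵀ(α, β)`, `ψ₀(x) = 0` for `x ≠ 0`. -/
def QWInit (α β : ℂ) (ψ : ℕ → ℤ → Fin 2 → ℂ) : Prop :=
  ψ 0 0 0 = α ∧ ψ 0 0 1 = β ∧ ∀ x : ℤ, x ≠ 0 → (ψ 0 x 0 = 0 ∧ ψ 0 x 1 = 0)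

/-- `P(X_t = x) = ‖ψ_t(x)‖²`. -/
def qwProb (ψ : ℕ → ℤ → Fin 2 → ℂ) (t : ℕ) (x : ℤ) : ℝ :=
  Complex.normSq (ψ t x 0) + Complex.normSq (ψ t x 1)

/-- The law of `X_t / t`: `μ_t = Σ_{x ∈ ℤ} P(X_t = x) δ_{x/t}`. -/
def qwMeasure (ψ : ℕ → ℤ → Fin 2 → ℂ) (t : ℕ) : Measure ℝ :=
  Measure.sum fun x : ℤ => ENNReal.ofReal (qwProb ψ t x) • Measure.dirac ((x : ℝ) / (t : ℝ))

/-- Weak convergence of `X_t / t` to the law with density `f`. -/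
def qwWeakLimit (ψ : ℕ → ℤ → Fin 2 → ℂ) (f : ℝ → ℝ) : Prop :=
  ∀ g : BoundedContinuousFunction ℝ ℝ,
    Tendsto (fun t : ℕ => ∫ y, g y ∂ qwMeasure ψ t) atTop (nhds (∫ y, g y * f y))

/-- `R(k) = diag(e^{ik}, e^{-ik})`. -/
def Rmat (k : ℝ) : Matrix (Fin 2) (Fin 2) ℂ :=
  !![Complex.exp (Complex.I * k), 0; 0, Complex.exp (-(Complex.I * k))]

/-- `H_γ = [[cos θ, sin θ], [sin θ, -cos θ]]` as a complex matrix. -/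
def Hcoin (θ : ℝ) : Matrix (Fin 2) (Fin 2) ℂ :=
  !![(Real.cos θ : ℂ), (Real.sin θ : ℂ); (Real.sin θ : ℂ), (-(Real.cos θ) : ℂ)]

/-!
The Fourier transform turns the walk into multiplication, at momentum `k`, by powers of a two-step
operator in `SU(2)`, which is `exp (i ω N)` for a quasi-energy `ω k` and a Hermitian involution
`N k`. The characteristic function of `X_{2t} / 2t` at `ξ` is the average over `k` of the inner
product of the states at `k` and `k - ξ / 2t`. There the involutions differ by `o(1)` while the
phases `t ω` differ by `ξ v + o(1)`, where `v = ω' / 2` is the group velocity, so the integrand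
converges to the expectation of `exp (-i ξ v N)` in the initial state. By dominated convergence, and
because the part of the limit that is odd under `k ↦ -k` integrates to zero, only the law of `|v|`
remains to be determined.

Writing `z = e^{2ik}`, one finds that `|v|` is an explicit function of `B z`, where `B` is a
Blaschke product with `B 0 = 0`. Such a function preserves the uniform law of the circle, so `B z`
may be replaced by a uniform point; the substitution that flattens the Konno density leads to the
same expression. Lévy's continuity theorem then gives weak convergence, and as `X_{2t} / 2t` lies in
`[-1, 1]`, convergence of the expectations of all continuous functions.
-/

section InnerFunctions

open Metric Real
open scoped ComplexConjugate

lemma measure_eq_of_integral_fourier_eq {T : ℝ} [Fact (0 < T)] {μ ν : Measure (AddCircle T)}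
    [IsFiniteMeasure μ] [IsFiniteMeasure ν]
    (h : ∀ n : ℤ, ∫ x, fourier n x ∂μ = ∫ x, fourier n x ∂ν) : μ = ν := by
  refine ext_of_forall_mem_subalgebra_integral_eq_of_polish
    (A := (fourierSubalgebra (T := T)).comap (BoundedContinuousFunction.toContinuousMapStarₐ ℂ))
    (fun x y hxy => ?_) fun g hg => ?_
  · obtain ⟨_, ⟨f, hf, rfl⟩, hne⟩ := fourierSubalgebra_separatesPoints (T := T) hxy
    exact ⟨f, ⟨f, ⟨BoundedContinuousFunction.mkOfCompact f, hf, rfl⟩, rfl⟩, hne⟩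
  · have hspan : (g : C(AddCircle T, ℂ)) ∈ Submodule.span ℂ (Set.range (fourier (T := T))) := by
      rw [← fourierSubalgebra_coe]; exact hg
    suffices ∀ f ∈ Submodule.span ℂ (Set.range (fourier (T := T))), ∫ x, f x ∂μ = ∫ x, f x ∂ν from
      this _ hspan
    have integrable (f : C(AddCircle T, ℂ)) (ρ : Measure (AddCircle T)) [IsFiniteMeasure ρ] :
        Integrable f ρ := (BoundedContinuousFunction.mkOfCompact f).integrable ρ
    intro f hf
    induction hf using Submodule.span_induction with
    | mem f hf => obtain ⟨n, rfl⟩ := hf; exact h n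
    | zero => simp
    | add f₁ f₂ _ _ h₁ h₂ =>
      simp only [ContinuousMap.add_apply]
      rw [integral_add (integrable f₁ μ) (integrable f₂ μ),
        integral_add (integrable f₁ ν) (integrable f₂ ν), h₁, h₂]
    | smul c f _ hf => simp only [ContinuousMap.smul_apply, integral_smul, hf]

lemma fourier_arg {z : ℂ} (hz : ‖z‖ = 1) (n : ℤ) :
    fourier n ((arg z : ℝ) : AddCircle (2 * π)) = z ^ n := by
  nth_rw 2 [← norm_mul_exp_arg_mul_I z]
  rw [fourier_coe_apply, hz, ofReal_one, one_mul, ← Complex.exp_int_mul]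
  congr 1
  push_cast
  field_simp

/-- Functions that are analytic in the unit disc, continuous up to and unimodular on the unit
circle, and that fix the origin. -/
structure IsInnerFixingZero (B : ℂ → ℂ) : Prop where
  diffContOnCl : DiffContOnCl ℂ B (ball 0 1)
  norm_eq_one : ∀ z, ‖z‖ = 1 → ‖B z‖ = 1
  apply_zero : B 0 = 0

namespace IsInnerFixingZero

variable {B : ℂ → ℂ}

lemma comp {C : ℂ → ℂ} (hB : IsInnerFixingZero B) (hC : IsInnerFixingZero C)
    (hmaps : Set.MapsTo C (ball 0 1) (ball 0 1)) : IsInnerFixingZero (B ∘ C) where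
  diffContOnCl := hB.diffContOnCl.comp hC.diffContOnCl hmaps
  norm_eq_one z hz := hB.norm_eq_one _ (hC.norm_eq_one z hz)
  apply_zero := by simp [hC.apply_zero, hB.apply_zero]

protected lemma id : IsInnerFixingZero id where
  diffContOnCl := differentiable_id.diffContOnCl
  norm_eq_one _ hz := hz
  apply_zero := rfl

lemma sq : IsInnerFixingZero (fun z => z ^ 2) where
  diffContOnCl := (differentiable_pow 2).diffContOnCl
  norm_eq_one z hz := by simp [hz]
  apply_zero := by simp

lemma continuous_comp_circleMap (hB : IsInnerFixingZero B) :
    Continuous fun θ => B (circleMap 0 1 θ) := by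
  refine hB.diffContOnCl.continuousOn_ball.comp_continuous (continuous_circleMap 0 1) fun θ => ?_
  simp

lemma circleAverage_pow (hB : IsInnerFixingZero B) {n : ℕ} (hn : n ≠ 0) :
    circleAverage (fun z => B z ^ n) 0 1 = 0 := by
  have h : DiffContOnCl ℂ (fun z => B z ^ n) (ball 0 |1|) := by
    rw [abs_one]
    exact (differentiable_pow n).comp_diffContOnCl hB.diffContOnCl
  rw [h.circleAverage, hB.apply_zero, zero_pow hn]

lemma circleAverage_zpow (hB : IsInnerFixingZero B) (n : ℤ) :
    circleAverage (fun z => B z ^ n) 0 1 = if n = 0 then 1 else 0 := by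
  obtain rfl | hn := eq_or_ne n 0
  · simp [circleAverage_const]
  rw [if_neg hn]
  obtain ⟨m, rfl | rfl⟩ := n.eq_nat_or_neg
  · exact_mod_cast hB.circleAverage_pow (by simpa using hn)
  have hconj : Set.EqOn (fun z => B z ^ (-m : ℤ)) (fun z => conj (B z ^ m)) (sphere 0 |1|) := by
    intro z hz
    have hz1 : ‖z‖ = 1 := by simpa using hz
    simp only [zpow_neg, zpow_natCast, ← inv_pow, map_pow]
    rw [inv_eq_conj (hB.norm_eq_one z hz1)]
  rw [circleAverage_congr_sphere hconj]
  have hint : CircleIntegrable (fun z => B z ^ m) 0 1 :=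
    (hB.continuous_comp_circleMap.pow m).intervalIntegrable _ _
  exact (conjCLE.toContinuousLinearMap.circleAverage_comp_comm hint).trans
    (by simp [hB.circleAverage_pow (n := m) (by simpa using hn)])

/-- The distribution of the argument of `B` on the unit circle, with total mass `2π`. -/
def argLaw (B : ℂ → ℂ) : Measure (AddCircle (2 * π)) :=
  (volume.restrict (Set.Ioc 0 (2 * π))).map fun θ => ((arg (B (circleMap 0 1 θ)) : ℝ) : AddCircle _)

instance (B : ℂ → ℂ) : IsFiniteMeasure (argLaw B) := by
  unfold argLaw; infer_instance

lemma integral_fourier_argLaw {E : Type*} [NormedAddCommGroup E] [NormedSpace ℝ E]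
    (hB : IsInnerFixingZero B) {h : ℂ → E} (hh : Continuous h) (n : ℤ) :
    ∫ x, h (fourier n x) ∂argLaw B = (2 * π) • circleAverage (fun z => h (B z ^ n)) 0 1 := by
  have hmeas : Measurable fun θ => ((arg (B (circleMap 0 1 θ)) : ℝ) : AddCircle (2 * π)) :=
    AddCircle.measurable_mk'.comp (measurable_arg.comp hB.continuous_comp_circleMap.measurable)
  have hcont : Continuous fun x : AddCircle (2 * π) => h (fourier n x) :=
    hh.comp (map_continuous _)
  rw [argLaw, integral_map hmeas.aemeasurable hcont.aestronglyMeasurable,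
    ← intervalIntegral.integral_of_le two_pi_pos.le, circleAverage_def,
    smul_inv_smul₀ two_pi_pos.ne']
  simp only [fourier_arg (hB.norm_eq_one _ (norm_circleMap_zero 1 _ |>.trans abs_one))]

/-- **Löwner's lemma**. -/
theorem circleAverage_comp {E : Type*} [NormedAddCommGroup E] [NormedSpace ℝ E]
    (hB : IsInnerFixingZero B) {h : ℂ → E} (hh : Continuous h) :
    circleAverage (fun z => h (B z)) 0 1 = circleAverage h 0 1 := by
  have heq : argLaw B = argLaw id := by
    have : Fact (0 < 2 * π) := ⟨two_pi_pos⟩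
    have fourierCoeff {C : ℂ → ℂ} (hC : IsInnerFixingZero C) (n : ℤ) :
        ∫ x, fourier n x ∂argLaw C = (2 * π) • if n = 0 then 1 else 0 := by
      rw [← hC.circleAverage_zpow n]
      exact integral_fourier_argLaw hC continuous_id n
    exact measure_eq_of_integral_fourier_eq fun n =>
      (fourierCoeff hB n).trans (fourierCoeff IsInnerFixingZero.id n).symm
  have := integral_fourier_argLaw hB hh 1
  rw [heq, integral_fourier_argLaw IsInnerFixingZero.id hh 1] at this
  simpa [two_pi_pos.ne', eq_comm] using this

/-- For `|p| < 1` the function is the Blaschke product `z (z - p) / (1 - p z)`. -/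
lemma exists_one_sub_mul_one_sub {p : ℝ} (hp : |p| ≤ 1) :
    ∃ B, IsInnerFixingZero B ∧ ∀ z, ‖z‖ = 1 → (1 - B z) * (1 - p * z) = 1 - z ^ 2 := by
  obtain hp | hp := hp.lt_or_eq
  · have hden {z : ℂ} (hz : ‖z‖ ≤ 1) : 1 - p * z ≠ 0 := by
      rw [sub_ne_zero]
      intro h
      have : |p| * ‖z‖ = 1 := by simpa using (congrArg norm h).symm
      nlinarith [norm_nonneg z, abs_nonneg p]
    refine ⟨fun z => z * (z - p) / (1 - p * z), ⟨?_, fun z hz => ?_, by simp⟩, fun z hz => ?_⟩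
    · refine DifferentiableOn.diffContOnCl ?_
      rw [closure_ball _ one_ne_zero]
      intro z hz
      have := hden (mem_closedBall_zero_iff.mp hz)
      exact DifferentiableAt.differentiableWithinAt (by fun_prop (disch := assumption))
    · have hconj : z - p = z * conj (1 - p * z) := by
        have : z * conj z = 1 := by simp [mul_conj, normSq_eq_norm_sq, hz]
        simp only [map_sub, map_one, map_mul, conj_ofReal]
        linear_combination (p : ℂ) * this
      rw [hconj, norm_div, norm_mul, norm_mul, norm_conj, hz, one_mul, one_mul,
        div_self (norm_ne_zero_iff.mpr (hden hz.le))]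
    · rw [sub_mul, div_mul_cancel₀ _ (hden hz.le)]
      ring
  · have hp2 : (p : ℂ) ^ 2 = 1 := by
      rw [← ofReal_pow, ← sq_abs, hp, one_pow, ofReal_one]
    refine ⟨fun z => -p * z, ⟨?_, fun z hz => by simp [hp, hz], by simp⟩, fun z _ => ?_⟩
    · exact (differentiable_id.const_mul _).diffContOnCl
    · linear_combination -z ^ 2 * hp2

end IsInnerFixingZero

end InnerFunctions

section KonnoLaw

open Real
open scoped Topology

variable {m : ℝ}

/-- The substitution that turns the Konno density with parameter `m` into the uniform density on
`(-π/2, π/2)`. -/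
def konnoMap (m τ : ℝ) : ℝ := m * Real.sin τ / √(1 - m ^ 2 * Real.cos τ ^ 2)

lemma abs_lt_one_of_mem_Ioo (hm : m ∈ Set.Ioo 0 1) : |m| < 1 := by
  rw [abs_of_pos hm.1]; exact hm.2

lemma one_sub_mul_cos_sq_pos (hm : |m| < 1) (τ : ℝ) : 0 < 1 - m ^ 2 * Real.cos τ ^ 2 := by
  have := (sq_lt_one_iff_abs_lt_one m).mpr hm
  nlinarith [Real.cos_sq_le_one τ, sq_nonneg m, sq_nonneg (Real.cos τ)]

lemma konnoMap_neg (m τ : ℝ) : konnoMap m (-τ) = -konnoMap m τ := by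
  simp only [konnoMap, Real.sin_neg, Real.cos_neg, mul_neg, neg_div]

/-- The derivative of `konnoMap`. -/
def konnoMapDeriv (m τ : ℝ) : ℝ :=
  m * Real.cos τ * (1 - m ^ 2) / √(1 - m ^ 2 * Real.cos τ ^ 2) ^ 3

lemma hasDerivAt_konnoMap (hm : |m| < 1) (τ : ℝ) :
    HasDerivAt (konnoMap m) (konnoMapDeriv m τ) τ := by
  have hD := one_sub_mul_cos_sq_pos hm τ
  have hq := Real.sqrt_pos.mpr hD
  have hsq_sub : HasDerivAt (fun τ => 1 - m ^ 2 * Real.cos τ ^ 2)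
      (2 * m ^ 2 * Real.cos τ * Real.sin τ) τ := by
    refine ((((Real.hasDerivAt_cos τ).pow 2).const_mul (m ^ 2)).const_sub 1).congr_deriv ?_
    push_cast
    ring
  refine (((Real.hasDerivAt_sin τ).const_mul m).div (hsq_sub.sqrt hD.ne') hq.ne').congr_deriv ?_
  have hsq : √(1 - m ^ 2 * Real.cos τ ^ 2) ^ 2 = 1 - m ^ 2 * Real.cos τ ^ 2 := Real.sq_sqrt hD.le
  have e := Real.sin_sq_add_cos_sq τ
  unfold konnoMapDeriv
  generalize √(1 - m ^ 2 * Real.cos τ ^ 2) = R at *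
  field_simp
  linear_combination m * Real.cos τ * (hsq - m ^ 2 * e)

lemma continuous_konnoMap (hm : |m| < 1) : Continuous (konnoMap m) :=
  continuous_iff_continuousAt.mpr fun τ => (hasDerivAt_konnoMap hm τ).continuousAt

lemma konnoMapDeriv_pos (hm : m ∈ Set.Ioo 0 1) {τ : ℝ} (hτ : τ ∈ Set.Ioo (-(π / 2)) (π / 2)) :
    0 < konnoMapDeriv m τ := by
  have hq := Real.sqrt_pos.mpr (one_sub_mul_cos_sq_pos (abs_lt_one_of_mem_Ioo hm) τ)
  have hc := Real.cos_pos_of_mem_Ioo hτ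
  have hm0 := hm.1
  have : 0 < 1 - m ^ 2 := by nlinarith [hm.2]
  unfold konnoMapDeriv
  positivity

lemma strictMonoOn_konnoMap (hm : m ∈ Set.Ioo 0 1) :
    StrictMonoOn (konnoMap m) (Set.Icc (-(π / 2)) (π / 2)) := by
  have hm' := abs_lt_one_of_mem_Ioo hm
  refine strictMonoOn_of_deriv_pos (convex_Icc _ _) (continuous_konnoMap hm').continuousOn ?_
  intro τ hτ
  rw [interior_Icc] at hτ
  rw [(hasDerivAt_konnoMap hm' τ).deriv]
  exact konnoMapDeriv_pos hm hτ

lemma image_konnoMap (hm : m ∈ Set.Ioo 0 1) :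
    konnoMap m '' Set.Ioo (-(π / 2)) (π / 2) = Set.Ioo (-m) m := by
  have hR : konnoMap m (π / 2) = m := by simp [konnoMap]
  have hL : konnoMap m (-(π / 2)) = -m := by rw [konnoMap_neg, hR]
  have h := (continuous_konnoMap (abs_lt_one_of_mem_Ioo hm)).continuousOn.image_Ioo_of_strictMonoOn
    (by linarith [pi_pos]) (strictMonoOn_konnoMap hm)
  rwa [hL, hR] at h

lemma konnoMapDeriv_mul_konnoDensity (hm : m ∈ Set.Ioo 0 1) {τ : ℝ}
    (hτ : τ ∈ Set.Ioo (-(π / 2)) (π / 2)) :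
    konnoMapDeriv m τ * konnoDensity m (konnoMap m τ) = π⁻¹ := by
  have hmem : konnoMap m τ ∈ Set.Ioo (-m) m := image_konnoMap hm ▸ Set.mem_image_of_mem _ hτ
  have hD := one_sub_mul_cos_sq_pos (abs_lt_one_of_mem_Ioo hm) τ
  have hq := Real.sqrt_pos.mpr hD
  have hc := Real.cos_pos_of_mem_Ioo hτ
  have hm0 := hm.1
  have hm1 : 0 < 1 - m ^ 2 := by nlinarith [hm.2]
  have hr := Real.sqrt_pos.mpr hm1
  have hsq := Real.sq_sqrt hD.le
  have hrsq := Real.sq_sqrt hm1.le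
  have e := Real.sin_sq_add_cos_sq τ
  rw [konnoDensity, abs_of_pos hm0, if_pos (abs_lt.mpr hmem)]
  have hone_sub : 1 - konnoMap m τ ^ 2 = (1 - m ^ 2) / √(1 - m ^ 2 * Real.cos τ ^ 2) ^ 2 := by
    rw [konnoMap, div_pow, eq_div_iff (by positivity), sub_mul, div_mul_cancel₀ _ (by positivity),
      hsq]
    linear_combination (-m ^ 2) * e
  have hsqrt : √(m ^ 2 - konnoMap m τ ^ 2) =
      m * √(1 - m ^ 2) * Real.cos τ / √(1 - m ^ 2 * Real.cos τ ^ 2) := by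
    rw [Real.sqrt_eq_iff_mul_self_eq_of_pos (by positivity), ← sq, konnoMap, div_pow, div_pow,
      eq_sub_iff_add_eq, ← add_div, div_eq_iff (by positivity), hsq, mul_pow, mul_pow, mul_pow,
      hrsq]
    linear_combination m ^ 2 * e
  rw [hone_sub, hsqrt, konnoMapDeriv]
  generalize √(1 - m ^ 2 * Real.cos τ ^ 2) = R at *
  generalize √(1 - m ^ 2) = T at *
  field_simp

section

variable {E : Type*} [NormedAddCommGroup E] [NormedSpace ℝ E]

lemma integral_konnoDensity_smul (hm : m ∈ Set.Ioo 0 1) (g : ℝ → E) :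
    ∫ x in -m..m, konnoDensity m x • g x = π⁻¹ • ∫ τ in -(π / 2)..π / 2, g (konnoMap m τ) := by
  rw [intervalIntegral.integral_of_le (by linarith [hm.1]),
    intervalIntegral.integral_of_le (by linarith [pi_pos]),
    integral_Ioc_eq_integral_Ioo, integral_Ioc_eq_integral_Ioo, ← image_konnoMap hm,
    integral_image_eq_integral_abs_deriv_smul measurableSet_Ioo
      (fun τ _ => (hasDerivAt_konnoMap (abs_lt_one_of_mem_Ioo hm) τ).hasDerivWithinAt)
      ((strictMonoOn_konnoMap hm).injOn.mono Set.Ioo_subset_Icc_self),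
    ← integral_smul]
  refine setIntegral_congr_fun measurableSet_Ioo fun τ hτ => ?_
  simp only [smul_smul, abs_of_pos (konnoMapDeriv_pos hm hτ), konnoMapDeriv_mul_konnoDensity hm hτ]

lemma konnoDensity_nonneg (hm : |m| ≤ 1) (x : ℝ) : 0 ≤ konnoDensity m x := by
  unfold konnoDensity
  split_ifs with hx
  · have : x ^ 2 ≤ 1 := by rw [← sq_abs]; exact pow_le_one₀ (abs_nonneg x) (hx.le.trans hm)
    have := sub_nonneg.mpr this
    positivity
  · exact le_rfl

lemma konnoDensity_eq_zero {x : ℝ} (hx : |m| ≤ |x|) : konnoDensity m x = 0 :=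
  if_neg hx.not_gt

lemma measurable_konnoDensity (m : ℝ) : Measurable (konnoDensity m) :=
  Measurable.ite (measurableSet_lt (by fun_prop) measurable_const) (by fun_prop) measurable_const

/-- The measure with density `konnoDensity m x * (1 - A * x)`. -/
def konnoLaw (m A : ℝ) : Measure ℝ :=
  volume.withDensity fun x => ENNReal.ofReal (konnoDensity m x * (1 - A * x))

lemma konnoDensity_mul_nonneg {A : ℝ} (hm : |m| ≤ 1) (hA : |A| * |m| ≤ 1) (x : ℝ) :
    0 ≤ konnoDensity m x * (1 - A * x) := by
  obtain hx | hx := le_or_gt |m| |x|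
  · rw [konnoDensity_eq_zero hx, zero_mul]
  · refine mul_nonneg (konnoDensity_nonneg hm x) (sub_nonneg.mpr ?_)
    calc A * x ≤ |A| * |x| := (le_abs_self _).trans (abs_mul A x).le
      _ ≤ |A| * |m| := by gcongr
      _ ≤ 1 := hA

lemma integral_konnoLaw {A : ℝ} (hm : m ∈ Set.Ioo 0 1) (hA : |A| * |m| ≤ 1) (g : ℝ → E) :
    ∫ x, g x ∂konnoLaw m A = ∫ x in -m..m, (konnoDensity m x * (1 - A * x)) • g x := by
  have hmeas : Measurable fun x => konnoDensity m x * (1 - A * x) :=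
    (measurable_konnoDensity m).mul (by fun_prop)
  have hsupp : ∀ x ∉ Set.Ioc (-m) m, (konnoDensity m x * (1 - A * x)) • g x = 0 := by
    intro x hx
    rw [konnoDensity_eq_zero, zero_mul, zero_smul]
    rw [abs_of_pos hm.1]
    contrapose! hx
    exact ⟨(abs_lt.mp hx).1, (abs_lt.mp hx).2.le⟩
  rw [konnoLaw, integral_withDensity_eq_integral_toReal_smul hmeas.ennreal_ofReal
    (ae_of_all _ fun _ => ENNReal.ofReal_lt_top), intervalIntegral.integral_of_le
    (by linarith [hm.1]), ← setIntegral_eq_integral_of_forall_compl_eq_zero (s := Set.Ioc (-m) m)]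
  all_goals simp only [ENNReal.toReal_ofReal
    (konnoDensity_mul_nonneg (abs_lt_one_of_mem_Ioo hm).le hA _)]
  exact hsupp

/-- The modulus `|konnoMap m τ|` as a function of `w = e^{2iτ}`; see `abs_konnoMap`. -/
def konnoSpeed (m : ℝ) (w : ℂ) : ℝ :=
  √(m ^ 2 * ‖1 - w‖ ^ 2 / (m ^ 2 * ‖1 - w‖ ^ 2 + 4 * (1 - m ^ 2)))

lemma norm_one_sub_circleMap_sq (τ : ℝ) : ‖1 - circleMap 0 1 τ ^ 2‖ ^ 2 = 4 * Real.sin τ ^ 2 := by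
  have h : 1 - circleMap 0 1 τ ^ 2 = -(2 * I * Real.sin τ) * circleMap 0 1 τ := by
    simp only [circleMap, zero_add, ofReal_one, one_mul, exp_mul_I, ofReal_sin]
    linear_combination Complex.sin (τ : ℂ) ^ 2 * I_sq - Complex.sin_sq_add_cos_sq (τ : ℂ)
  rw [h, norm_mul, norm_circleMap_zero, norm_neg, norm_mul, norm_mul, norm_I, norm_real,
    Real.norm_eq_abs, Complex.norm_ofNat, abs_one, mul_one, mul_one, mul_pow, sq_abs]
  norm_num

lemma abs_konnoMap (hm : |m| < 1) (τ : ℝ) :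
    |konnoMap m τ| = konnoSpeed m (circleMap 0 1 τ ^ 2) := by
  have hD := one_sub_mul_cos_sq_pos hm τ
  have e := Real.sin_sq_add_cos_sq τ
  rw [konnoSpeed, ← Real.sqrt_sq_eq_abs, konnoMap, div_pow, mul_pow, Real.sq_sqrt hD.le,
    norm_one_sub_circleMap_sq,
    show m ^ 2 * (4 * Real.sin τ ^ 2) + 4 * (1 - m ^ 2) = 4 * (1 - m ^ 2 * Real.cos τ ^ 2) by
      linear_combination 4 * m ^ 2 * e, mul_left_comm, mul_div_mul_left _ _ four_ne_zero]

lemma continuous_konnoSpeed (hm : |m| < 1) : Continuous (konnoSpeed m) := by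
  have hm2 : 0 < 1 - m ^ 2 := sub_pos.mpr ((sq_lt_one_iff_abs_lt_one m).mpr hm)
  refine Real.continuous_sqrt.comp (Continuous.div (by fun_prop) (by fun_prop) fun w => ?_)
  positivity

/-- The even part of a function; an integral against `konnoLaw` only sees the even part of the
integrand times `1 - A * x`. -/
def evenPart (h : ℝ → E) (x : ℝ) : E := (2⁻¹ : ℝ) • (h x + h (-x))

lemma evenPart_abs (h : ℝ → E) (x : ℝ) : evenPart h |x| = evenPart h x := by
  obtain hx | hx := abs_choice x <;> rw [hx]
  simp only [evenPart, neg_neg, add_comm]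

lemma intervalIntegral_evenPart {h : ℝ → E} (hh : Continuous h) (a : ℝ) :
    ∫ x in -a..a, evenPart h x = ∫ x in -a..a, h x := by
  have hneg : ∫ x in -a..a, h (-x) = ∫ x in -a..a, h x := by
    rw [intervalIntegral.integral_comp_neg, neg_neg]
  simp only [evenPart]
  rw [intervalIntegral.integral_smul, intervalIntegral.integral_add
    (hh.intervalIntegrable _ _) ((hh.comp' continuous_neg).intervalIntegrable _ _), hneg,
    ← two_smul ℝ, inv_smul_smul₀ two_ne_zero]

lemma circleAverage_comp_sq {F : ℂ → E} (hF : Continuous F) :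
    circleAverage (fun w => F (w ^ 2)) 0 1 =
      π⁻¹ • ∫ τ in -(π / 2)..π / 2, F (circleMap 0 1 τ ^ 2) := by
  have hper : Function.Periodic (fun τ => F (circleMap 0 1 τ ^ 2)) π := fun τ => by
    simp only [circleMap, zero_add, ofReal_add, add_mul, Complex.exp_add, exp_pi_mul_I]
    ring_nf
  have hcont : Continuous fun τ => F (circleMap 0 1 τ ^ 2) := by fun_prop
  have hhalf := hper.intervalIntegral_add_zsmul_eq 2 0 fun a b => hcont.intervalIntegrable a b
  have hshift := hper.intervalIntegral_add_eq (-(π / 2)) 0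
  rw [show -(π / 2) + π = π / 2 by ring] at hshift
  rw [circleAverage_def, hshift, mul_inv, mul_comm, mul_smul]
  congr 1
  rw [inv_smul_eq_iff₀ two_ne_zero]
  simpa [two_smul, two_mul] using hhalf

lemma integral_konnoLaw_eq_circleAverage {A : ℝ} (hm : m ∈ Set.Ioo 0 1) (hA : |A| * |m| ≤ 1)
    {g : ℝ → E} (hg : Continuous g) :
    ∫ x, g x ∂konnoLaw m A =
      circleAverage (fun w => evenPart (fun x => (1 - A * x) • g x) (konnoSpeed m w)) 0 1 := by
  have hm' := abs_lt_one_of_mem_Ioo hm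
  set h : ℝ → E := fun x => (1 - A * x) • g x
  have hh : Continuous h := by fun_prop
  set F : ℂ → E := fun w => evenPart h (konnoSpeed m w)
  have hF : Continuous F := by
    have := continuous_konnoSpeed hm'
    unfold F evenPart
    fun_prop
  have heven (τ : ℝ) : evenPart (fun τ => h (konnoMap m τ)) τ = F (circleMap 0 1 τ ^ 2) := by
    simp only [F, ← abs_konnoMap hm', evenPart_abs]
    simp only [evenPart, konnoMap_neg]
  calc ∫ x, g x ∂konnoLaw m A
      = π⁻¹ • ∫ τ in -(π / 2)..π / 2, h (konnoMap m τ) := by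
        rw [integral_konnoLaw hm hA, ← integral_konnoDensity_smul hm]
        simp only [h, mul_smul]
    _ = π⁻¹ • ∫ τ in -(π / 2)..π / 2, F (circleMap 0 1 τ ^ 2) := by
        rw [← intervalIntegral_evenPart (hh.comp' (continuous_konnoMap hm'))]
        simp only [heven]
    _ = circleAverage (fun w => F (w ^ 2)) 0 1 := (circleAverage_comp_sq hF).symm
    _ = circleAverage F 0 1 := IsInnerFixingZero.sq.circleAverage_comp hF

lemma isProbabilityMeasure_konnoLaw {A : ℝ} (hm : m ∈ Set.Ioo 0 1) (hA : |A| * |m| ≤ 1) :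
    IsProbabilityMeasure (konnoLaw m A) := by
  have h := integral_konnoLaw_eq_circleAverage hm hA (g := fun _ => (1 : ℝ)) continuous_const
  have heven (x : ℝ) : evenPart (fun x => (1 - A * x) • (1 : ℝ)) x = 1 := by
    simp only [evenPart, smul_eq_mul]; ring
  rw [integral_const, smul_eq_mul, mul_one] at h
  simp only [heven, circleAverage_const] at h
  exact ⟨(ENNReal.toReal_eq_one_iff _).mp h⟩

end

end KonnoLaw

section QuantumWalk

open Real
open scoped Topology ComplexConjugate Matrix

section Momentum

variable {ι : Type*}

/-- The Fourier transform `∑ₓ e^{-ikx} φ(x)` of a state `φ` on `ℤ` with internal states `ι`. -/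
def momentumState (φ : ℤ → ι → ℂ) (k : ℝ) : ι → ℂ :=
  ∑' x : ℤ, cexp (-(I * k * x)) • φ x

variable {φ χ : ℤ → ι → ℂ}

lemma momentumState_eq_sum {s : Finset ℤ} (hs : φ.support ⊆ s) (k : ℝ) :
    momentumState φ k = ∑ x ∈ s, cexp (-(I * k * x)) • φ x :=
  tsum_eq_sum fun x hx => by rw [Function.notMem_support.mp fun h => hx (hs h), smul_zero]

lemma hasSum_momentumState (hφ : φ.support.Finite) (k : ℝ) :
    HasSum (fun x : ℤ => cexp (-(I * k * x)) • φ x) (momentumState φ k) :=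
  (summable_of_ne_finset_zero (s := hφ.toFinset) fun x hx => by
    simp [Function.notMem_support.mp fun h => hx (hφ.mem_toFinset.mpr h)]).hasSum

lemma momentumState_sub (φ : ℤ → ι → ℂ) (k h : ℝ) :
    momentumState φ (k - h) = momentumState (fun x => cexp (I * h * x) • φ x) k := by
  refine tsum_congr fun x => ?_
  rw [smul_smul, ← Complex.exp_add]
  push_cast
  ring_nf

lemma continuous_momentumState (hφ : φ.support.Finite) :
    Continuous (momentumState φ) := by
  simp only [funext (momentumState_eq_sum hφ.coe_toFinset.ge)]
  fun_prop

lemma integral_exp_int_mul (n : ℤ) :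
    ∫ k in (0 : ℝ)..2 * π, cexp (I * n * k) = if n = 0 then 2 * (π : ℂ) else 0 := by
  split_ifs with h
  · simp [h]
  · have hc : I * (n : ℂ) ≠ 0 := mul_ne_zero I_ne_zero (by exact_mod_cast h)
    rw [integral_exp_mul_complex hc]
    have : I * (n : ℂ) * ((2 * π : ℝ) : ℂ) = n * (2 * π * I) := by
      push_cast
      ring
    rw [this, exp_int_mul_two_pi_mul_I]
    simp

lemma integral_star_momentumState_dotProduct [Fintype ι] (hφ : φ.support.Finite)
    (hχ : χ.support.Finite) :
    ∫ k in (0 : ℝ)..2 * π, star (momentumState φ k) ⬝ᵥ momentumState χ k =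
      2 * π * ∑' x, star (φ x) ⬝ᵥ χ x := by
  classical
  set s := hφ.toFinset ∪ hχ.toFinset
  have hsφ : φ.support ⊆ s := by simp [s]
  have hsχ : χ.support ⊆ s := by simp [s]
  have hexpand (k : ℝ) : star (momentumState φ k) ⬝ᵥ momentumState χ k =
      ∑ x ∈ s, ∑ y ∈ s, star (φ x) ⬝ᵥ χ y * cexp (I * ((x - y : ℤ) : ℂ) * k) := by
    rw [momentumState_eq_sum hsφ, momentumState_eq_sum hsχ, star_sum, sum_dotProduct]
    refine Finset.sum_congr rfl fun x _ => ?_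
    rw [dotProduct_sum]
    refine Finset.sum_congr rfl fun y _ => ?_
    rw [star_smul, smul_dotProduct, dotProduct_smul, smul_eq_mul, smul_eq_mul, ← mul_assoc,
      mul_comm (_ * _), star_def, ← exp_conj, ← Complex.exp_add]
    congr 2
    simp only [map_neg, map_mul, conj_I, conj_ofReal, neg_mul, map_intCast, neg_neg, Int.cast_sub]
    ring
  simp_rw [hexpand]
  rw [intervalIntegral.integral_finsetSum fun x _ =>
    Continuous.intervalIntegrable (by fun_prop) _ _, tsum_eq_sum (s := s) fun x hx => by
      rw [Function.notMem_support.mp fun h => hx (hsφ h), star_zero, zero_dotProduct],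
    Finset.mul_sum]
  refine Finset.sum_congr rfl fun x hx => ?_
  rw [intervalIntegral.integral_finsetSum fun y _ =>
    Continuous.intervalIntegrable (by fun_prop) _ _]
  simp_rw [intervalIntegral.integral_const_mul, integral_exp_int_mul, sub_eq_zero, mul_ite,
    mul_zero]
  rw [Finset.sum_ite_eq, if_pos hx, mul_comm]

end Momentum

lemma star_mulVec_dotProduct_mulVec {n : Type*} [Fintype n] [DecidableEq n] {M : Matrix n n ℂ}
    (hM : M ∈ Matrix.unitaryGroup n ℂ) (v w : n → ℂ) :
    star (M *ᵥ v) ⬝ᵥ (M *ᵥ w) = star v ⬝ᵥ w := by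
  rw [Matrix.star_mulVec, ← Matrix.dotProduct_mulVec, Matrix.mulVec_mulVec,
    ← Matrix.star_eq_conjTranspose, Unitary.star_mul_self_of_mem hM, Matrix.one_mulVec]

lemma norm_star_dotProduct_le_one {n : Type*} [Fintype n] {v w : n → ℂ} (hv : star v ⬝ᵥ v = 1)
    (hw : star w ⬝ᵥ w = 1) : ‖star v ⬝ᵥ w‖ ≤ 1 := by
  have hnorm {u : n → ℂ} (hu : star u ⬝ᵥ u = 1) : ‖WithLp.toLp 2 u‖ = 1 := by
    rw [norm_eq_sqrt_re_inner (𝕜 := ℂ), EuclideanSpace.inner_toLp_toLp, dotProduct_comm, hu]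
    simp
  have h := norm_inner_le_norm (𝕜 := ℂ) (WithLp.toLp 2 v) (WithLp.toLp 2 w)
  rwa [EuclideanSpace.inner_toLp_toLp, dotProduct_comm, hnorm hv, hnorm hw, one_mul] at h

variable {α β : ℂ} {U : ℕ → Matrix (Fin 2) (Fin 2) ℂ} {ψ : ℕ → ℤ → Fin 2 → ℂ}

lemma QWEvolves.succ_apply (hevol : QWEvolves U ψ) (t : ℕ) (x : ℤ) :
    ψ (t + 1) x = ![(U t *ᵥ ψ t (x + 1)) 0, (U t *ᵥ ψ t (x - 1)) 1] := by
  ext i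
  fin_cases i
  · simpa [Matrix.mulVec, dotProduct, Fin.sum_univ_two] using (hevol t x).1
  · simpa [Matrix.mulVec, dotProduct, Fin.sum_univ_two] using (hevol t x).2

lemma QWInit.apply_zero (hinit : QWInit α β ψ) : ψ 0 0 = ![α, β] := by
  ext i
  fin_cases i
  exacts [hinit.1, hinit.2.1]

lemma QWInit.apply_of_ne_zero (hinit : QWInit α β ψ) {x : ℤ} (hx : x ≠ 0) : ψ 0 x = 0 := by
  ext i
  fin_cases i
  exacts [(hinit.2.2 x hx).1, (hinit.2.2 x hx).2]

lemma QWEvolves.eq_zero_of_lt_abs (hevol : QWEvolves U ψ) (hinit : QWInit α β ψ) {t : ℕ} {x : ℤ}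
    (hx : t < |x|) : ψ t x = 0 := by
  induction t generalizing x with
  | zero => exact hinit.apply_of_ne_zero (abs_pos.mp hx)
  | succ t ih =>
    have hright : t < |x + 1| := by push_cast at hx; grind
    have hleft : t < |x - 1| := by push_cast at hx; grind
    simp [hevol.succ_apply, ih hright, ih hleft]

lemma QWEvolves.finite_support (hevol : QWEvolves U ψ) (hinit : QWInit α β ψ) (t : ℕ) :
    (ψ t).support.Finite := by
  refine (Set.finite_Icc (-t : ℤ) t).subset fun x hx => abs_le.mp ?_
  contrapose! hx
  exact Function.notMem_support.mpr (hevol.eq_zero_of_lt_abs hinit hx)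

lemma QWInit.momentumState_zero (hinit : QWInit α β ψ) (k : ℝ) :
    momentumState (ψ 0) k = ![α, β] := by
  rw [momentumState, tsum_eq_single 0 fun x hx => by rw [hinit.apply_of_ne_zero hx, smul_zero],
    hinit.apply_zero]
  simp

lemma Rmat_mulVec (k : ℝ) (v : Fin 2 → ℂ) :
    Rmat k *ᵥ v = ![cexp (I * k) * v 0, cexp (-(I * k)) * v 1] := by
  ext i
  fin_cases i <;> simp [Rmat, Matrix.mulVec, dotProduct, Fin.sum_univ_two]

lemma QWEvolves.momentumState_succ (hevol : QWEvolves U ψ) {t : ℕ} (ht : (ψ t).support.Finite)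
    (k : ℝ) : momentumState (ψ (t + 1)) k = (Rmat k * U t) *ᵥ momentumState (ψ t) k := by
  have hcoin (i : Fin 2) : HasSum (fun x : ℤ => cexp (-(I * k * x)) * (U t *ᵥ ψ t x) i)
      ((U t *ᵥ momentumState (ψ t) k) i) := by
    have h := (hasSum_momentumState ht k).map (U t).mulVecLin
      (U t).mulVecLin.continuous_of_finiteDimensional
    simpa [Function.comp_def, Matrix.mulVec_smul] using Pi.hasSum.mp h i
  have hshift (i : Fin 2) (d : ℤ) : HasSum
      (fun x : ℤ => cexp (-(I * k * x)) * (U t *ᵥ ψ t (x + d)) i)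
      (cexp (I * k * d) * (U t *ᵥ momentumState (ψ t) k) i) := by
    refine (((Equiv.addRight d).hasSum_iff.mpr (hcoin i)).mul_left _).congr_fun fun x => ?_
    rw [Function.comp_apply, Equiv.coe_addRight, ← mul_assoc, ← Complex.exp_add]
    push_cast
    ring_nf
  rw [← Matrix.mulVec_mulVec, Rmat_mulVec]
  refine HasSum.tsum_eq (Pi.hasSum.mpr (Fin.forall_fin_two.mpr ⟨?_, ?_⟩))
  · simpa [hevol.succ_apply] using hshift 0 1
  · simpa [hevol.succ_apply, ← sub_eq_add_neg] using hshift 1 (-1)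

lemma qwProb_eq (ψ : ℕ → ℤ → Fin 2 → ℂ) (t : ℕ) (x : ℤ) :
    (qwProb ψ t x : ℂ) = star (ψ t x) ⬝ᵥ ψ t x := by
  simp [qwProb, normSq_eq_conj_mul_self, dotProduct, Fin.sum_univ_two]

lemma qwProb_nonneg (ψ : ℕ → ℤ → Fin 2 → ℂ) (t : ℕ) (x : ℤ) : 0 ≤ qwProb ψ t x :=
  add_nonneg (normSq_nonneg _) (normSq_nonneg _)

lemma integral_qwMeasure {E : Type*} [NormedAddCommGroup E] [NormedSpace ℝ E] [CompleteSpace E]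
    {t : ℕ} (ht : (ψ t).support.Finite) (g : ℝ → E) :
    ∫ y, g y ∂qwMeasure ψ t = ∑' x : ℤ, qwProb ψ t x • g (x / t) := by
  have hzero (x : ℤ) (hx : x ∉ ht.toFinset) : qwProb ψ t x = 0 := by
    simp [qwProb, Function.notMem_support.mp (by simpa using hx)]
  have hsum : qwMeasure ψ t = ∑ x ∈ ht.toFinset,
      ENNReal.ofReal (qwProb ψ t x) • Measure.dirac ((x : ℝ) / (t : ℝ)) := by
    ext s hs
    rw [qwMeasure, Measure.sum_apply _ hs, Measure.finsetSum_apply,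
      tsum_eq_sum fun x hx => by simp [hzero x hx]]
  have hint (x : ℤ) : Integrable g (ENNReal.ofReal (qwProb ψ t x) • Measure.dirac ((x : ℝ) / t)) :=
    (integrable_dirac (by simp)).smul_measure ENNReal.ofReal_ne_top
  rw [hsum, integral_finsetSum_measure fun x _ => hint x,
    tsum_eq_sum fun x hx => by rw [hzero x hx, zero_smul]]
  simp only [integral_smul_measure, integral_dirac, ENNReal.toReal_ofReal (qwProb_nonneg ψ t _)]

lemma QWEvolves.integral_qwMeasure_congr (hevol : QWEvolves U ψ) (hinit : QWInit α β ψ)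
    {t : ℕ} {f g : ℝ → ℝ} (hfg : Set.EqOn f g (Set.Icc (-1) 1)) :
    ∫ x, f x ∂qwMeasure ψ t = ∫ x, g x ∂qwMeasure ψ t := by
  have ht := hevol.finite_support hinit t
  rw [integral_qwMeasure ht, integral_qwMeasure ht]
  refine tsum_congr fun x => ?_
  obtain hx | hx := le_or_gt |x| t
  · rw [hfg (abs_le.mp ?_)]
    rw [abs_div, Nat.abs_cast]
    exact div_le_one_of_le₀ (by exact_mod_cast hx) (Nat.cast_nonneg t)
  · simp [qwProb, hevol.eq_zero_of_lt_abs hinit hx]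

lemma Rmat_mem_unitaryGroup (k : ℝ) : Rmat k ∈ Matrix.unitaryGroup (Fin 2) ℂ := by
  rw [Matrix.mem_unitaryGroup_iff]
  ext i j
  fin_cases i <;> fin_cases j <;>
    simp [Rmat, Matrix.mul_apply, Matrix.star_apply, ← exp_conj, ← Complex.exp_add]

lemma Hcoin_mem_unitaryGroup (θ : ℝ) : Hcoin θ ∈ Matrix.unitaryGroup (Fin 2) ℂ := by
  have h := Complex.cos_sq_add_sin_sq θ
  rw [Matrix.mem_unitaryGroup_iff]
  ext i j
  fin_cases i <;> fin_cases j <;>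
    simp [Hcoin, Matrix.mul_apply, Matrix.star_apply, ← Complex.cos_conj, ← Complex.sin_conj] <;>
    grind

lemma star_dotProduct_self_eq_one (hαβ : normSq α + normSq β = 1) :
    star ![α, β] ⬝ᵥ ![α, β] = 1 := by
  simp [dotProduct, Fin.sum_univ_two, ← normSq_eq_conj_mul_self, ← ofReal_add, hαβ]

lemma star_momentumState_dotProduct_self (hevol : QWEvolves U ψ) (hinit : QWInit α β ψ)
    (hU : ∀ t, U t ∈ Matrix.unitaryGroup (Fin 2) ℂ)
    (hαβ : normSq α + normSq β = 1) (t : ℕ) (k : ℝ) :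
    star (momentumState (ψ t) k) ⬝ᵥ momentumState (ψ t) k = 1 := by
  induction t with
  | zero =>
    rw [hinit.momentumState_zero, star_dotProduct_self_eq_one hαβ]
  | succ t ih =>
    rw [hevol.momentumState_succ (hevol.finite_support hinit t),
      star_mulVec_dotProduct_mulVec (mul_mem (Rmat_mem_unitaryGroup k) (hU t)), ih]

lemma charFun_qwMeasure {t : ℕ} (ht : (ψ t).support.Finite) (ξ : ℝ) :
    charFun (qwMeasure ψ t) ξ = (2 * π : ℂ)⁻¹ * ∫ k in (0 : ℝ)..2 * π,
      star (momentumState (ψ t) k) ⬝ᵥ momentumState (ψ t) (k - ξ / t) := by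
  have hχ : (Function.support fun x : ℤ => cexp (I * (ξ / t : ℝ) * x) • ψ t x).Finite :=
    ht.subset (Function.support_subset_iff'.mpr fun x hx => by
      rw [Function.notMem_support.mp hx, smul_zero])
  simp only [momentumState_sub]
  rw [integral_star_momentumState_dotProduct ht hχ, inv_mul_cancel_left₀ (by simp [pi_ne_zero]),
    charFun_apply_real, integral_qwMeasure ht]
  refine tsum_congr fun x => ?_
  rw [dotProduct_smul, ← qwProb_eq, real_smul, smul_eq_mul, mul_comm]
  push_cast
  ring_nf

lemma isProbabilityMeasure_qwMeasure (hevol : QWEvolves U ψ) (hinit : QWInit α β ψ)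
    (hU : ∀ t, U t ∈ Matrix.unitaryGroup (Fin 2) ℂ) (hαβ : normSq α + normSq β = 1) (t : ℕ) :
    IsProbabilityMeasure (qwMeasure ψ t) := by
  have h := charFun_qwMeasure (hevol.finite_support hinit t) 0
  simp only [zero_div, sub_zero, star_momentumState_dotProduct_self hevol hinit hU hαβ,
    charFun_zero, intervalIntegral.integral_const, real_smul, mul_one] at h
  have hreal : (qwMeasure ψ t).real Set.univ = 1 := by
    rw [← ofReal_inj, h]
    push_cast
    exact inv_mul_cancel₀ (by simp [pi_ne_zero])
  exact ⟨(ENNReal.toReal_eq_one_iff _).mp hreal⟩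

end QuantumWalk

section HermitianInvolution

open Real
open scoped ComplexConjugate Matrix Topology

section Algebra

variable {A : Type*} [Ring A] [Algebra ℂ A]

/-- The exponential `exp (i θ N)` of an involution `N`. -/
def involutionExp (N : A) (θ : ℝ) : A :=
  (Real.cos θ : ℂ) • 1 + (I * Real.sin θ) • N

lemma involutionExp_add {N : A} (hN : N * N = 1) (θ η : ℝ) :
    involutionExp N (θ + η) = involutionExp N θ * involutionExp N η := by
  simp only [involutionExp, add_mul, mul_add, smul_mul_smul_comm, one_mul, mul_one, hN]
  rw [Real.cos_add, Real.sin_add]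
  push_cast
  linear_combination (norm := module) (-(Complex.sin θ * Complex.sin η) * I_sq) • (1 : A)

lemma involutionExp_pow {N : A} (hN : N * N = 1) (θ : ℝ) (t : ℕ) :
    involutionExp N θ ^ t = involutionExp N (t * θ) := by
  induction t with
  | zero => simp [involutionExp]
  | succ t ih => rw [pow_succ, ih, ← involutionExp_add hN, Nat.cast_succ, add_one_mul]

lemma star_involutionExp [StarRing A] [StarModule ℂ A] {N : A} (hN : IsSelfAdjoint N) (θ : ℝ) :
    star (involutionExp N θ) = involutionExp N (-θ) := by
  simp [involutionExp, hN.star_eq, ← Complex.cos_conj, ← Complex.sin_conj]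

end Algebra

lemma tendsto_involutionExp_neg_mul_involutionExp {A ι : Type*} [NormedRing A] [NormedAlgebra ℂ A]
    {l : Filter ι} {N : A} {N' : ι → A} {a b : ι → ℝ} {δ : ℝ} (hN : N * N = 1)
    (hN' : Tendsto N' l (𝓝 N)) (hab : Tendsto (fun i => b i - a i) l (𝓝 δ)) :
    Tendsto (fun i => involutionExp N (-a i) * involutionExp (N' i) (b i)) l
      (𝓝 (involutionExp N δ)) := by
  have hmain : Tendsto (fun i => involutionExp N (b i - a i)) l (𝓝 (involutionExp N δ)) := by
    have : Continuous (involutionExp N) := by unfold involutionExp; fun_prop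
    exact (this.tendsto δ).comp hab
  have hdiff : Tendsto (fun i => involutionExp N (-a i) * ((I * Real.sin (b i)) • (N' i - N)))
      l (𝓝 0) := by
    have hsub : Tendsto (fun i => N' i - N) l (𝓝 0) := by simpa using hN'.sub_const N
    have hsin : IsBoundedUnder (· ≤ ·) l fun i => ‖I * (Real.sin (b i) : ℂ)‖ :=
      isBoundedUnder_of ⟨1, fun i => by simpa [-ofReal_sin] using Real.abs_sin_le_one (b i)⟩
    have hexp : IsBoundedUnder (· ≤ ·) l fun i => ‖involutionExp N (-a i)‖ := by
      refine isBoundedUnder_of ⟨‖(1 : A)‖ + ‖N‖, fun i => (norm_add_le _ _).trans ?_⟩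
      simp only [norm_smul, norm_mul, norm_I, one_mul, norm_real, Real.norm_eq_abs]
      gcongr
      · exact mul_le_of_le_one_left (norm_nonneg _) (Real.abs_cos_le_one _)
      · exact mul_le_of_le_one_left (norm_nonneg _) (Real.abs_sin_le_one _)
    exact isBoundedUnder_le_mul_tendsto_zero hexp (hsin.smul_tendsto_zero hsub)
  refine (add_zero (involutionExp N δ) ▸ hmain.add hdiff).congr fun i => ?_
  rw [sub_eq_neg_add, involutionExp_add hN, ← mul_add]
  congr 1
  simp only [involutionExp]
  module

/-- The combination `x σ₁ + y σ₂ + z σ₃` of the Pauli matrices. -/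
def pauliVector (x y z : ℝ) : Matrix (Fin 2) (Fin 2) ℂ :=
  !![(z : ℂ), x - I * y; x + I * y, -z]

lemma isSelfAdjoint_pauliVector (x y z : ℝ) : IsSelfAdjoint (pauliVector x y z) := by
  ext i j
  fin_cases i <;> fin_cases j <;> simp [pauliVector, Matrix.star_apply, sub_eq_add_neg]

lemma pauliVector_mul_self {x y z : ℝ} (h : x ^ 2 + y ^ 2 + z ^ 2 = 1) :
    pauliVector x y z * pauliVector x y z = 1 := by
  have h' : (x : ℂ) ^ 2 + y ^ 2 + z ^ 2 = 1 := by exact_mod_cast h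
  ext i j
  fin_cases i <;> fin_cases j <;>
    simp [pauliVector, Matrix.mul_apply, Fin.sum_univ_two] <;> grind [I_sq]

lemma star_dotProduct_pauliVector_mulVec (x y z : ℝ) (α β : ℂ) :
    star ![α, β] ⬝ᵥ (pauliVector x y z *ᵥ ![α, β]) =
      ((normSq α - normSq β) * z + 2 * (conj α * β).re * x + 2 * (conj α * β).im * y : ℝ) := by
  apply Complex.ext <;>
    simp [pauliVector, Matrix.mulVec, dotProduct, Fin.sum_univ_two, normSq_apply] <;> ring

end HermitianInvolution

section TwoPeriodWalk

open Real
open scoped ComplexConjugate Matrix Topology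

lemma tendsto_natCast_mul_sub {f : ℝ → ℝ} {f' x : ℝ} (hf : HasDerivAt f f' x) (h : ℝ) :
    Tendsto (fun t : ℕ => t * f (x + h / t) - t * f x) atTop (𝓝 (h * f')) := by
  have hlim := hf.hasFDerivAt.lim h (tendsto_norm_atTop_atTop.comp tendsto_natCast_atTop_atTop)
  simpa [mul_sub, div_eq_inv_mul] using hlim

lemma intervalIntegrable_comp_of_isCompact {X E : Type*} [TopologicalSpace X]
    [NormedAddCommGroup E] {h : X → E} {v : ℝ → X} {K : Set X} (hh : Continuous h)
    (hv : AEStronglyMeasurable v) (hK : IsCompact K) (hvK : ∀ x, v x ∈ K) (a b : ℝ) :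
    IntervalIntegrable (fun x => h (v x)) volume a b := by
  obtain ⟨C, hC⟩ := hK.exists_bound_of_continuousOn hh.continuousOn
  exact intervalIntegrable_const.mono_fun' (hh.comp_aestronglyMeasurable hv).restrict
    (ae_of_all _ fun x => hC _ (hvK x))

lemma integral_eq_zero_of_comp_sub_left_eq_neg {E : Type*} [NormedAddCommGroup E] [NormedSpace ℝ E]
    {f : ℝ → E} {d : ℝ} (hf : ∀ x, f (d - x) = -f x) : ∫ x in (0 : ℝ)..d, f x = 0 := by
  have h := intervalIntegral.integral_comp_sub_left (a := 0) (b := d) f d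
  simp only [hf, sub_self, sub_zero, intervalIntegral.integral_neg] at h
  have := IsAddTorsionFree.of_isTorsionFree ℝ E
  exact self_eq_neg.mp h.symm

/-- The two-step evolution operator at momentum `k` of the walk with alternating coins
`Hcoin θ₀`, `Hcoin θ₁`. -/
def twoStep (θ₀ θ₁ k : ℝ) : Matrix (Fin 2) (Fin 2) ℂ :=
  Rmat k * Hcoin θ₁ * (Rmat k * Hcoin θ₀)

/-- Half the trace of `twoStep`; its eigenvalues are `exp (± i ω)` with `cos ω = cosEnergy`. -/
def cosEnergy (θ₀ θ₁ k : ℝ) : ℝ :=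
  Real.cos θ₀ * Real.cos θ₁ * Real.cos (2 * k) + Real.sin θ₀ * Real.sin θ₁

/-- The quasi-energy `ω` of the two-step evolution, normalised to lie in `[0, π]`. -/
def quasiEnergy (θ₀ θ₁ k : ℝ) : ℝ := arccos (cosEnergy θ₀ θ₁ k)

/-- The group velocity per unit time, i.e. half the derivative of `quasiEnergy`, the latter being
the phase of two steps. It is also the third component of the Bloch vector of `twoStep`. -/
def groupVelocity (θ₀ θ₁ k : ℝ) : ℝ :=
  Real.cos θ₀ * Real.cos θ₁ * Real.sin (2 * k) / Real.sin (quasiEnergy θ₀ θ₁ k)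

/-- The first component of the Bloch vector of `twoStep`. -/
def blochX (θ₀ θ₁ k : ℝ) : ℝ :=
  Real.sin θ₀ * Real.cos θ₁ * Real.sin (2 * k) / Real.sin (quasiEnergy θ₀ θ₁ k)

/-- The second component of the Bloch vector of `twoStep`. -/
def blochY (θ₀ θ₁ k : ℝ) : ℝ :=
  (Real.sin θ₀ * Real.cos θ₁ * Real.cos (2 * k) - Real.cos θ₀ * Real.sin θ₁) /
    Real.sin (quasiEnergy θ₀ θ₁ k)

/-- The reflection `N` such that `twoStep = exp (i ω N)`. -/
def blochAxis (θ₀ θ₁ k : ℝ) : Matrix (Fin 2) (Fin 2) ℂ :=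
  pauliVector (blochX θ₀ θ₁ k) (blochY θ₀ θ₁ k) (groupVelocity θ₀ θ₁ k)

/-- The coefficient `A` of the factor `1 - A x` by which the initial state `(α, β)` tilts the Konno
density in the limit law. -/
def konnoTilt (θ₀ : ℝ) (α β : ℂ) : ℝ :=
  normSq α - normSq β + (α * conj β + conj α * β).re *
    (Real.sin θ₀ / Real.cos θ₀)

variable {θ₀ θ₁ k : ℝ} {α β : ℂ} {ψ : ℕ → ℤ → Fin 2 → ℂ}

lemma one_sub_cosEnergy_sq (θ₀ θ₁ k : ℝ) :
    1 - cosEnergy θ₀ θ₁ k ^ 2 = (Real.sin θ₀ * Real.cos θ₁ * Real.sin (2 * k)) ^ 2 +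
      (Real.sin θ₀ * Real.cos θ₁ * Real.cos (2 * k) - Real.cos θ₀ * Real.sin θ₁) ^ 2 +
      (Real.cos θ₀ * Real.cos θ₁ * Real.sin (2 * k)) ^ 2 := by
  have h₀ := Real.sin_sq_add_cos_sq θ₀
  have h₁ := Real.sin_sq_add_cos_sq θ₁
  have hk := Real.sin_sq_add_cos_sq (2 * k)
  unfold cosEnergy
  grind

lemma cos_quasiEnergy (θ₀ θ₁ k : ℝ) : Real.cos (quasiEnergy θ₀ θ₁ k) = cosEnergy θ₀ θ₁ k := by
  have h : |cosEnergy θ₀ θ₁ k| ≤ 1 := by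
    rw [← sq_le_one_iff_abs_le_one, ← sub_nonneg, one_sub_cosEnergy_sq]
    positivity
  exact Real.cos_arccos (abs_le.mp h).1 (abs_le.mp h).2

lemma sin_quasiEnergy_sq (θ₀ θ₁ k : ℝ) : Real.sin (quasiEnergy θ₀ θ₁ k) ^ 2 =
    (Real.sin θ₀ * Real.cos θ₁ * Real.sin (2 * k)) ^ 2 +
      (Real.sin θ₀ * Real.cos θ₁ * Real.cos (2 * k) - Real.cos θ₀ * Real.sin θ₁) ^ 2 +
      (Real.cos θ₀ * Real.cos θ₁ * Real.sin (2 * k)) ^ 2 := by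
  rw [Real.sin_sq, cos_quasiEnergy, one_sub_cosEnergy_sq]

lemma sin_quasiEnergy_ne_zero (h₀ : Real.cos θ₀ ≠ 0) (h₁ : Real.cos θ₁ ≠ 0)
    (hk : Real.sin (2 * k) ≠ 0) : Real.sin (quasiEnergy θ₀ θ₁ k) ≠ 0 := by
  have : 0 < Real.sin (quasiEnergy θ₀ θ₁ k) ^ 2 := by
    rw [sin_quasiEnergy_sq]
    positivity
  exact fun h => by simp [h] at this

lemma abs_groupVelocity_le_one (θ₀ θ₁ k : ℝ) : |groupVelocity θ₀ θ₁ k| ≤ 1 := by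
  rw [← sq_le_one_iff_abs_le_one, groupVelocity, div_pow]
  refine div_le_one_of_le₀ ?_ (sq_nonneg _)
  rw [sin_quasiEnergy_sq]
  exact le_add_of_nonneg_left (by positivity)

lemma abs_blochY_le_one (θ₀ θ₁ k : ℝ) : |blochY θ₀ θ₁ k| ≤ 1 := by
  rw [← sq_le_one_iff_abs_le_one, blochY, div_pow]
  refine div_le_one_of_le₀ ?_ (sq_nonneg _)
  rw [sin_quasiEnergy_sq, add_right_comm]
  exact le_add_of_nonneg_left (by positivity)

lemma isSelfAdjoint_blochAxis (θ₀ θ₁ k : ℝ) : IsSelfAdjoint (blochAxis θ₀ θ₁ k) :=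
  isSelfAdjoint_pauliVector _ _ _

lemma blochAxis_mul_self (hk : Real.sin (quasiEnergy θ₀ θ₁ k) ≠ 0) :
    blochAxis θ₀ θ₁ k * blochAxis θ₀ θ₁ k = 1 := by
  refine pauliVector_mul_self ?_
  rw [blochX, blochY, groupVelocity, div_pow, div_pow, div_pow, ← add_div, ← add_div,
    ← sin_quasiEnergy_sq, div_self (pow_ne_zero 2 hk)]

lemma twoStep_eq_involutionExp (hk : Real.sin (quasiEnergy θ₀ θ₁ k) ≠ 0) :
    twoStep θ₀ θ₁ k = involutionExp (blochAxis θ₀ θ₁ k) (quasiEnergy θ₀ θ₁ k) := by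
  have hexp : cexp (I * k) * cexp (I * k) =
      (Real.cos (2 * k) : ℂ) + (Real.sin (2 * k) : ℂ) * I := by
    rw [← Complex.exp_add, ← two_mul, mul_left_comm, mul_comm I, ofReal_cos, ofReal_sin,
      ← exp_mul_I]
    push_cast
    rfl
  have hexp' : cexp (-(I * k)) * cexp (-(I * k)) =
      (Real.cos (2 * k) : ℂ) - (Real.sin (2 * k) : ℂ) * I := by
    rw [← Complex.exp_add, ← neg_add, ← two_mul, mul_left_comm, mul_comm I, ← neg_mul, ofReal_cos,
      ofReal_sin, exp_mul_I, Complex.cos_neg, Complex.sin_neg]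
    push_cast
    ring
  have hone : cexp (I * k) * cexp (-(I * k)) = 1 := by rw [← Complex.exp_add]; simp
  have hs : (Real.sin (quasiEnergy θ₀ θ₁ k) : ℂ) ≠ 0 := ofReal_ne_zero.mpr hk
  rw [involutionExp, cos_quasiEnergy, mul_comm I, mul_smul]
  ext i j
  fin_cases i <;> fin_cases j <;>
    simp [-ofReal_cos, -ofReal_sin, twoStep, Rmat, Hcoin, blochAxis, pauliVector, cosEnergy, blochX,
      blochY, groupVelocity, Matrix.mul_apply, Fin.sum_univ_two] <;>
    field_simp <;> grind [I_sq]

lemma alternatingCoin_mem_unitaryGroup (θ₀ θ₁ : ℝ) (t : ℕ) :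
    (if Even t then Hcoin θ₀ else Hcoin θ₁) ∈ Matrix.unitaryGroup (Fin 2) ℂ := by
  split_ifs <;> exact Hcoin_mem_unitaryGroup _

lemma momentumState_two_mul (hinit : QWInit α β ψ)
    (hevol : QWEvolves (fun t => if Even t then Hcoin θ₀ else Hcoin θ₁) ψ) (t : ℕ) (k : ℝ) :
    momentumState (ψ (2 * t)) k = twoStep θ₀ θ₁ k ^ t *ᵥ ![α, β] := by
  induction t with
  | zero => simp [hinit.momentumState_zero]
  | succ t ih =>
    rw [Nat.mul_succ, hevol.momentumState_succ (hevol.finite_support hinit _),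
      hevol.momentumState_succ (hevol.finite_support hinit _), ih, if_neg (by simp),
      if_pos (by simp), Matrix.mulVec_mulVec, Matrix.mulVec_mulVec, pow_succ', twoStep]

lemma hasDerivAt_quasiEnergy (hk : Real.sin (quasiEnergy θ₀ θ₁ k) ≠ 0) :
    HasDerivAt (quasiEnergy θ₀ θ₁) (2 * groupVelocity θ₀ θ₁ k) k := by
  have hcos : HasDerivAt (cosEnergy θ₀ θ₁)
      (-(2 * (Real.cos θ₀ * Real.cos θ₁ * Real.sin (2 * k)))) k := by
    refine ((((hasDerivAt_id k).const_mul 2).cos.const_mul _).add_const _).congr_deriv ?_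
    simp only [id]
    ring
  have hsin : Real.sin (quasiEnergy θ₀ θ₁ k) = √(1 - cosEnergy θ₀ θ₁ k ^ 2) := Real.sin_arccos _
  have hne (ε : ℝ) (hε : ε ^ 2 = 1) : cosEnergy θ₀ θ₁ k ≠ ε := fun h => hk (by
    rw [hsin, h, hε, sub_self, Real.sqrt_zero])
  refine ((Real.hasDerivAt_arccos (hne (-1) (by norm_num)) (hne 1 (one_pow 2))).comp k
    hcos).congr_deriv ?_
  rw [groupVelocity, hsin]
  ring

lemma continuous_quasiEnergy (θ₀ θ₁ : ℝ) : Continuous (quasiEnergy θ₀ θ₁) := by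
  unfold quasiEnergy cosEnergy
  fun_prop

lemma continuousAt_blochAxis (hk : Real.sin (quasiEnergy θ₀ θ₁ k) ≠ 0) :
    ContinuousAt (blochAxis θ₀ θ₁) k := by
  have hω := continuous_quasiEnergy θ₀ θ₁
  have hv : ContinuousAt (groupVelocity θ₀ θ₁) k := by
    unfold groupVelocity; exact ContinuousAt.div (by fun_prop) (by fun_prop) hk
  have hx : ContinuousAt (blochX θ₀ θ₁) k := by
    unfold blochX; exact ContinuousAt.div (by fun_prop) (by fun_prop) hk
  have hy : ContinuousAt (blochY θ₀ θ₁) k := by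
    unfold blochY; exact ContinuousAt.div (by fun_prop) (by fun_prop) hk
  have hpauli : Continuous fun p : ℝ × ℝ × ℝ => pauliVector p.1 p.2.1 p.2.2 := by
    refine continuous_matrix fun i j => ?_
    fin_cases i <;> fin_cases j <;>
      simp only [pauliVector, Fin.zero_eta, Fin.mk_one, Fin.isValue, Matrix.of_apply,
        Matrix.cons_val', Matrix.cons_val_zero, Matrix.cons_val_one, Matrix.cons_val_fin_one] <;>
      fun_prop
  exact hpauli.continuousAt.comp (hx.prodMk (hy.prodMk hv))

section InnerLimit

open scoped Matrix.Norms.L2Operator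

lemma tendsto_star_twoStep_pow_mul (hk : Real.sin (quasiEnergy θ₀ θ₁ k) ≠ 0) (ξ : ℝ) :
    Tendsto (fun t : ℕ => star (twoStep θ₀ θ₁ k ^ t) * twoStep θ₀ θ₁ (k - ξ / (2 * t : ℕ)) ^ t)
      atTop (𝓝 (involutionExp (blochAxis θ₀ θ₁ k) (-(ξ * groupVelocity θ₀ θ₁ k)))) := by
  have hω := continuous_quasiEnergy θ₀ θ₁
  have hshift : Tendsto (fun t : ℕ => k - ξ / (2 * t : ℕ)) atTop (𝓝 k) := by
    have h := (tendsto_const_div_atTop_nhds_zero_nat (ξ / 2)).const_sub k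
    simpa [div_div] using h
  have hphase : Tendsto (fun t : ℕ => t * quasiEnergy θ₀ θ₁ (k - ξ / (2 * t : ℕ)) -
      t * quasiEnergy θ₀ θ₁ k) atTop (𝓝 (-(ξ * groupVelocity θ₀ θ₁ k))) := by
    have h := tendsto_natCast_mul_sub (hasDerivAt_quasiEnergy hk) (-(ξ / 2))
    rw [show -(ξ / 2) * (2 * groupVelocity θ₀ θ₁ k) = -(ξ * groupVelocity θ₀ θ₁ k) by ring] at h
    refine h.congr fun t => ?_
    rw [neg_div, ← sub_eq_add_neg, div_div]
    push_cast
    rfl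
  have hne : ∀ᶠ t : ℕ in atTop, Real.sin (quasiEnergy θ₀ θ₁ (k - ξ / (2 * t : ℕ))) ≠ 0 :=
    ((Real.continuous_sin.comp hω).continuousAt.tendsto.comp hshift).eventually_ne hk
  refine (tendsto_involutionExp_neg_mul_involutionExp (blochAxis_mul_self hk)
    ((continuousAt_blochAxis hk).tendsto.comp hshift) hphase).congr' ?_
  filter_upwards [hne] with t ht
  rw [twoStep_eq_involutionExp hk, twoStep_eq_involutionExp ht,
    involutionExp_pow (blochAxis_mul_self hk), involutionExp_pow (blochAxis_mul_self ht),
    star_involutionExp (isSelfAdjoint_blochAxis θ₀ θ₁ k), Function.comp_apply]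

end InnerLimit

lemma blochX_eq_mul_groupVelocity (h₀ : Real.cos θ₀ ≠ 0) (θ₁ k : ℝ) :
    blochX θ₀ θ₁ k = Real.sin θ₀ / Real.cos θ₀ * groupVelocity θ₀ θ₁ k := by
  rw [blochX, groupVelocity]
  field_simp

lemma star_dotProduct_blochAxis_mulVec (h₀ : Real.cos θ₀ ≠ 0) (θ₁ k : ℝ) (α β : ℂ) :
    star ![α, β] ⬝ᵥ (blochAxis θ₀ θ₁ k *ᵥ ![α, β]) =
      (konnoTilt θ₀ α β * groupVelocity θ₀ θ₁ k +
        2 * (conj α * β).im * blochY θ₀ θ₁ k : ℝ) := by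
  have hre : (α * conj β).re = (conj α * β).re := by simp
  rw [blochAxis, star_dotProduct_pauliVector_mulVec, blochX_eq_mul_groupVelocity h₀, konnoTilt,
    add_re, hre]
  push_cast
  ring

lemma star_dotProduct_involutionExp_blochAxis_mulVec (h₀ : Real.cos θ₀ ≠ 0)
    (hαβ : normSq α + normSq β = 1) (θ₁ k ξ : ℝ) :
    star ![α, β] ⬝ᵥ (involutionExp (blochAxis θ₀ θ₁ k) (-(ξ * groupVelocity θ₀ θ₁ k)) *ᵥ ![α, β]) =
      evenPart (fun x : ℝ => (1 - konnoTilt θ₀ α β * x) • cexp (ξ * x * I))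
          (groupVelocity θ₀ θ₁ k) -
        I * Real.sin (ξ * groupVelocity θ₀ θ₁ k) *
          (2 * (conj α * β).im * blochY θ₀ θ₁ k : ℝ) := by
  rw [involutionExp, Matrix.add_mulVec, Matrix.smul_mulVec, Matrix.smul_mulVec, Matrix.one_mulVec,
    dotProduct_add, dotProduct_smul, dotProduct_smul, star_dotProduct_self_eq_one hαβ,
    star_dotProduct_blochAxis_mulVec h₀]
  simp only [evenPart, real_smul, smul_eq_mul, ← ofReal_mul, exp_mul_I, mul_neg, ofReal_neg,
    Complex.cos_neg, Complex.sin_neg, ofReal_cos, ofReal_sin, Real.cos_neg, Real.sin_neg]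
  push_cast
  ring

lemma ae_sin_two_mul_ne_zero : ∀ᵐ k : ℝ, Real.sin (2 * k) ≠ 0 := by
  have hc : (Set.range fun n : ℤ => (n : ℝ) * π / 2).Countable := Set.countable_range _
  filter_upwards [hc.ae_notMem volume] with k hk hs
  obtain ⟨n, hn⟩ := Real.sin_eq_zero_iff.mp hs
  exact hk ⟨n, by simp only; linarith⟩

lemma tendsto_star_momentumState_dotProduct (h₀ : Real.cos θ₀ ≠ 0) (hαβ : normSq α + normSq β = 1)
    (hinit : QWInit α β ψ) (hevol : QWEvolves (fun t => if Even t then Hcoin θ₀ else Hcoin θ₁) ψ)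
    (hk : Real.sin (quasiEnergy θ₀ θ₁ k) ≠ 0) (ξ : ℝ) :
    Tendsto (fun t : ℕ => star (momentumState (ψ (2 * t)) k) ⬝ᵥ
        momentumState (ψ (2 * t)) (k - ξ / (2 * t : ℕ))) atTop
      (𝓝 (evenPart (fun x : ℝ => (1 - konnoTilt θ₀ α β * x) • cexp (ξ * x * I))
          (groupVelocity θ₀ θ₁ k) -
        I * Real.sin (ξ * groupVelocity θ₀ θ₁ k) *
          (2 * (conj α * β).im * blochY θ₀ θ₁ k : ℝ))) := by
  rw [← star_dotProduct_involutionExp_blochAxis_mulVec h₀ hαβ]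
  have hcont : Continuous fun M : Matrix (Fin 2) (Fin 2) ℂ => star ![α, β] ⬝ᵥ (M *ᵥ ![α, β]) := by
    fun_prop
  refine ((hcont.tendsto _).comp (tendsto_star_twoStep_pow_mul hk ξ)).congr fun t => ?_
  rw [momentumState_two_mul hinit hevol, momentumState_two_mul hinit hevol, Matrix.star_mulVec,
    ← Matrix.dotProduct_mulVec, Matrix.mulVec_mulVec, ← Matrix.star_eq_conjTranspose]
  rfl

lemma tendsto_integral_star_momentumState_dotProduct (h₀ : Real.cos θ₀ ≠ 0) (h₁ : Real.cos θ₁ ≠ 0)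
    (hαβ : normSq α + normSq β = 1) (hinit : QWInit α β ψ)
    (hevol : QWEvolves (fun t => if Even t then Hcoin θ₀ else Hcoin θ₁) ψ) (ξ : ℝ) :
    Tendsto (fun t : ℕ => ∫ k in (0 : ℝ)..2 * π, star (momentumState (ψ (2 * t)) k) ⬝ᵥ
        momentumState (ψ (2 * t)) (k - ξ / (2 * t : ℕ))) atTop
      (𝓝 (∫ k in (0 : ℝ)..2 * π,
        (evenPart (fun x : ℝ => (1 - konnoTilt θ₀ α β * x) • cexp (ξ * x * I))
          (groupVelocity θ₀ θ₁ k) -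
        I * Real.sin (ξ * groupVelocity θ₀ θ₁ k) *
          (2 * (conj α * β).im * blochY θ₀ θ₁ k : ℝ)))) := by
  have hnorm := star_momentumState_dotProduct_self hevol hinit
    (alternatingCoin_mem_unitaryGroup θ₀ θ₁) hαβ
  refine intervalIntegral.tendsto_integral_filter_of_dominated_convergence (fun _ => 1)
    (.of_forall fun t => ?_) (.of_forall fun t => ae_of_all _ fun k _ =>
      norm_star_dotProduct_le_one (hnorm _ _) (hnorm _ _)) intervalIntegrable_const ?_
  · have hcont := continuous_momentumState (hevol.finite_support hinit (2 * t))
    exact Continuous.aestronglyMeasurable (by fun_prop)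
  · filter_upwards [ae_sin_two_mul_ne_zero] with k hk _
    exact tendsto_star_momentumState_dotProduct h₀ hαβ hinit hevol
      (sin_quasiEnergy_ne_zero h₀ h₁ hk) ξ

lemma cos_two_mul_two_pi_sub (k : ℝ) : Real.cos (2 * (2 * π - k)) = Real.cos (2 * k) := by
  simpa [mul_sub] using Real.cos_nat_mul_two_pi_sub (2 * k) 2

lemma sin_two_mul_two_pi_sub (k : ℝ) : Real.sin (2 * (2 * π - k)) = -Real.sin (2 * k) := by
  simpa [mul_sub] using Real.sin_nat_mul_two_pi_sub (2 * k) 2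

lemma cosEnergy_two_pi_sub (θ₀ θ₁ k : ℝ) : cosEnergy θ₀ θ₁ (2 * π - k) = cosEnergy θ₀ θ₁ k := by
  rw [cosEnergy, cosEnergy, cos_two_mul_two_pi_sub]

lemma groupVelocity_two_pi_sub (θ₀ θ₁ k : ℝ) :
    groupVelocity θ₀ θ₁ (2 * π - k) = -groupVelocity θ₀ θ₁ k := by
  rw [groupVelocity, groupVelocity, quasiEnergy, quasiEnergy, cosEnergy_two_pi_sub,
    sin_two_mul_two_pi_sub, mul_neg, neg_div]

lemma blochY_two_pi_sub (θ₀ θ₁ k : ℝ) : blochY θ₀ θ₁ (2 * π - k) = blochY θ₀ θ₁ k := by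
  rw [blochY, blochY, quasiEnergy, quasiEnergy, cosEnergy_two_pi_sub, cos_two_mul_two_pi_sub]

lemma measurable_groupVelocity (θ₀ θ₁ : ℝ) : Measurable (groupVelocity θ₀ θ₁) := by
  have := (continuous_quasiEnergy θ₀ θ₁).measurable
  unfold groupVelocity
  fun_prop

lemma measurable_blochY (θ₀ θ₁ : ℝ) : Measurable (blochY θ₀ θ₁) := by
  have := (continuous_quasiEnergy θ₀ θ₁).measurable
  unfold blochY
  fun_prop

lemma integral_sin_mul_blochY (θ₀ θ₁ ξ c : ℝ) :
    ∫ k in (0 : ℝ)..2 * π, I * Real.sin (ξ * groupVelocity θ₀ θ₁ k) * (c * blochY θ₀ θ₁ k : ℝ) =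
      0 :=
  integral_eq_zero_of_comp_sub_left_eq_neg fun k => by
    rw [groupVelocity_two_pi_sub, blochY_two_pi_sub, mul_neg, Real.sin_neg, ofReal_neg, mul_neg,
      neg_mul]

lemma tendsto_charFun_qwMeasure (h₀ : Real.cos θ₀ ≠ 0) (h₁ : Real.cos θ₁ ≠ 0)
    (hαβ : normSq α + normSq β = 1) (hinit : QWInit α β ψ)
    (hevol : QWEvolves (fun t => if Even t then Hcoin θ₀ else Hcoin θ₁) ψ) (ξ : ℝ) :
    Tendsto (fun t : ℕ => charFun (qwMeasure ψ (2 * t)) ξ) atTop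
      (𝓝 ((2 * π : ℂ)⁻¹ * ∫ k in (0 : ℝ)..2 * π,
        evenPart (fun x : ℝ => (1 - konnoTilt θ₀ α β * x) • cexp (ξ * x * I))
          (groupVelocity θ₀ θ₁ k))) := by
  simp only [charFun_qwMeasure (hevol.finite_support hinit _)]
  refine Tendsto.const_mul _ ?_
  have hlim := tendsto_integral_star_momentumState_dotProduct h₀ h₁ hαβ hinit hevol ξ
  have hv := measurable_groupVelocity θ₀ θ₁
  have hy := measurable_blochY θ₀ θ₁
  rwa [intervalIntegral.integral_sub, integral_sin_mul_blochY, sub_zero] at hlim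
  · refine intervalIntegrable_comp_of_isCompact ?_ hv.aestronglyMeasurable isCompact_Icc
      (fun k => abs_le.mp (abs_groupVelocity_le_one θ₀ θ₁ k)) _ _
    unfold evenPart
    fun_prop
  · exact intervalIntegrable_comp_of_isCompact (h := fun p : ℝ × ℝ =>
        I * Real.sin (ξ * p.1) * (2 * (conj α * β).im * p.2 : ℝ)) (by fun_prop)
      (hv.prodMk hy).aestronglyMeasurable (isCompact_Icc.prod isCompact_Icc)
      (fun k => ⟨abs_le.mp (abs_groupVelocity_le_one θ₀ θ₁ k),
        abs_le.mp (abs_blochY_le_one θ₀ θ₁ k)⟩) _ _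

lemma groupVelocity_comm (θ₀ θ₁ k : ℝ) : groupVelocity θ₀ θ₁ k = groupVelocity θ₁ θ₀ k := by
  simp only [groupVelocity, quasiEnergy, cosEnergy, mul_comm (Real.cos θ₀), mul_comm (Real.sin θ₀)]

lemma sin_quasiEnergy_sq_eq_norm (h₁ : Real.cos θ₁ ≠ 0) (hs₀ : Real.sin θ₀ ≠ 0) (k : ℝ) :
    Real.sin (quasiEnergy θ₀ θ₁ k) ^ 2 =
      (Real.sin θ₀ * Real.cos θ₁ *
        ‖1 - (Real.cos θ₀ * Real.sin θ₁ / (Real.sin θ₀ * Real.cos θ₁) : ℝ) *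
          circleMap 0 1 (2 * k)‖) ^ 2 +
      (Real.cos θ₀ * Real.cos θ₁ * Real.sin (2 * k)) ^ 2 := by
  have hk := Real.sin_sq_add_cos_sq (2 * k)
  rw [sin_quasiEnergy_sq, mul_pow _ ‖_‖, Complex.sq_norm, normSq_apply]
  simp only [sub_re, one_re, sub_im, one_im, re_ofReal_mul, im_ofReal_mul, circleMap_zero_re,
    circleMap_zero_im, one_mul]
  field_simp
  linear_combination (Real.cos θ₀ ^ 2 * Real.sin θ₁ ^ 2 - Real.sin θ₀ ^ 2 * Real.cos θ₁ ^ 2) * (-hk)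

lemma abs_groupVelocity_eq_konnoSpeed (h₀ : Real.cos θ₀ ≠ 0) (h₁ : Real.cos θ₁ ≠ 0)
    (hs₀ : Real.sin θ₀ ≠ 0) (hk : Real.sin (2 * k) ≠ 0) {b : ℂ}
    (hb : (1 - b) * (1 - (Real.cos θ₀ * Real.sin θ₁ / (Real.sin θ₀ * Real.cos θ₁) : ℝ) *
      circleMap 0 1 (2 * k)) = 1 - circleMap 0 1 (2 * k) ^ 2) :
    |groupVelocity θ₀ θ₁ k| = konnoSpeed |Real.cos θ₀| b := by
  have hsin := sin_quasiEnergy_sq_eq_norm h₁ hs₀ k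
  have hnorm := congrArg (‖·‖ ^ 2) hb
  simp only [norm_mul, mul_pow, norm_one_sub_circleMap_sq] at hnorm
  have := sin_quasiEnergy_ne_zero h₀ h₁ hk
  generalize ‖1 - (Real.cos θ₀ * Real.sin θ₁ / (Real.sin θ₀ * Real.cos θ₁) : ℝ) *
      circleMap 0 1 (2 * k)‖ = q at *
  have hq : q ≠ 0 := by rintro rfl; simp [hk] at hnorm
  rw [konnoSpeed, ← Real.sqrt_sq_eq_abs, groupVelocity, sq_abs, ← Real.sin_sq, div_pow, hsin]
  congr 1
  have : 0 < (Real.sin θ₀ * Real.cos θ₁ * q) ^ 2 := by positivity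
  rw [div_eq_div_iff (by positivity) (by positivity)]
  linear_combination (Real.sin θ₀ * Real.cos θ₀ * Real.cos θ₁) ^ 2 * (-hnorm)

lemma abs_cos_mul_sin_div_le_one (h : |Real.cos θ₀| ≤ |Real.cos θ₁|) :
    |Real.cos θ₀ * Real.sin θ₁ / (Real.sin θ₀ * Real.cos θ₁)| ≤ 1 := by
  rw [abs_div]
  refine div_le_one_of_le₀ (sq_le_sq.mp ?_) (abs_nonneg _)
  have := sq_le_sq.mpr h
  rw [mul_pow, mul_pow, Real.sin_sq, Real.sin_sq]
  linarith

lemma integral_comp_abs_groupVelocity {E : Type*} [NormedAddCommGroup E] [NormedSpace ℝ E]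
    [CompleteSpace E] (h₀ : Real.cos θ₀ ≠ 0) (h₁ : Real.cos θ₁ ≠ 0)
    (hm : min |Real.cos θ₀| |Real.cos θ₁| < 1) {h : ℝ → E} (hh : Continuous h) :
    (2 * π)⁻¹ • ∫ k in (0 : ℝ)..2 * π, h |groupVelocity θ₀ θ₁ k| =
      circleAverage (fun w => h (konnoSpeed (min |Real.cos θ₀| |Real.cos θ₁|) w)) 0 1 := by
  wlog hle : |Real.cos θ₀| ≤ |Real.cos θ₁| generalizing θ₀ θ₁
  · simpa only [groupVelocity_comm θ₀, min_comm |Real.cos θ₀|] using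
      this h₁ h₀ (min_comm |Real.cos θ₀| _ ▸ hm) (le_of_not_ge hle)
  rw [min_eq_left hle] at hm ⊢
  have hs₀ : Real.sin θ₀ ≠ 0 := fun hs =>
    hm.ne ((abs_eq zero_le_one).mpr (Real.sin_eq_zero_iff_cos_eq.mp hs))
  obtain ⟨B, hB, hBeq⟩ :=
    IsInnerFixingZero.exists_one_sub_mul_one_sub (abs_cos_mul_sin_div_le_one hle)
  have hBsq := hB.comp IsInnerFixingZero.sq fun z hz => by
    simpa [sq_lt_one_iff_abs_lt_one] using hz
  have hcont : Continuous fun w => h (konnoSpeed |Real.cos θ₀| w) :=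
    hh.comp (continuous_konnoSpeed (by rwa [abs_abs]))
  rw [← hBsq.circleAverage_comp hcont, circleAverage_def]
  congr 1
  refine intervalIntegral.integral_congr_ae (ae_sin_two_mul_ne_zero.mono fun k hk _ => ?_)
  rw [abs_groupVelocity_eq_konnoSpeed h₀ h₁ hs₀ hk (hBeq _ (by simp))]
  simp [circleMap_zero_pow]

lemma abs_konnoTilt_mul_abs_cos_le_one (h₀ : Real.cos θ₀ ≠ 0) (hαβ : normSq α + normSq β = 1) :
    |konnoTilt θ₀ α β| * |Real.cos θ₀| ≤ 1 := by
  have hnorm := star_dotProduct_self_eq_one hαβ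
  have hcoin : (konnoTilt θ₀ α β * Real.cos θ₀ : ℝ) = star ![α, β] ⬝ᵥ (Hcoin θ₀ *ᵥ ![α, β]) := by
    rw [konnoTilt, add_mul, mul_assoc _ (_ / _), div_mul_cancel₀ _ h₀]
    apply Complex.ext <;>
      simp [-ofReal_cos, -ofReal_sin, Hcoin, Matrix.mulVec, dotProduct, Fin.sum_univ_two,
        normSq_apply] <;>
      ring
  rw [← abs_mul, ← Real.norm_eq_abs, ← norm_real, hcoin]
  refine norm_star_dotProduct_le_one hnorm ?_
  rw [star_mulVec_dotProduct_mulVec (Hcoin_mem_unitaryGroup θ₀), hnorm]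

lemma abs_konnoTilt_mul_min_le_one (h₀ : Real.cos θ₀ ≠ 0) (θ₁ : ℝ)
    (hαβ : normSq α + normSq β = 1) :
    |konnoTilt θ₀ α β| * |(min |Real.cos θ₀| |Real.cos θ₁|)| ≤ 1 := by
  refine le_trans ?_ (abs_konnoTilt_mul_abs_cos_le_one h₀ hαβ)
  rw [abs_of_nonneg (le_min (abs_nonneg (Real.cos θ₀)) (abs_nonneg (Real.cos θ₁)))]
  exact mul_le_mul_of_nonneg_left (min_le_left _ _) (abs_nonneg _)

lemma charFun_konnoLaw (h₀ : Real.cos θ₀ ≠ 0) (h₁ : Real.cos θ₁ ≠ 0)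
    (hm : min |Real.cos θ₀| |Real.cos θ₁| < 1) {A : ℝ}
    (hA : |A| * |(min |Real.cos θ₀| |Real.cos θ₁|)| ≤ 1) (ξ : ℝ) :
    charFun (konnoLaw (min |Real.cos θ₀| |Real.cos θ₁|) A) ξ =
      (2 * π : ℂ)⁻¹ * ∫ k in (0 : ℝ)..2 * π,
        evenPart (fun x : ℝ => (1 - A * x) • cexp (ξ * x * I)) (groupVelocity θ₀ θ₁ k) := by
  have hpos : 0 < min |Real.cos θ₀| |Real.cos θ₁| := lt_min (abs_pos.mpr h₀) (abs_pos.mpr h₁)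
  have hcont : Continuous (evenPart fun x : ℝ => (1 - A * x) • cexp (ξ * x * I)) := by
    unfold evenPart; fun_prop
  rw [charFun_apply_real, integral_konnoLaw_eq_circleAverage ⟨hpos, hm⟩ hA (by fun_prop),
    ← integral_comp_abs_groupVelocity h₀ h₁ hm hcont, real_smul]
  simp only [evenPart_abs]
  push_cast
  rfl

lemma tendsto_integral_qwMeasure (h₀ : Real.cos θ₀ ≠ 0) (h₁ : Real.cos θ₁ ≠ 0)
    (hm : min |Real.cos θ₀| |Real.cos θ₁| < 1) (hαβ : normSq α + normSq β = 1)
    (hinit : QWInit α β ψ) (hevol : QWEvolves (fun t => if Even t then Hcoin θ₀ else Hcoin θ₁) ψ)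
    (g : BoundedContinuousFunction ℝ ℝ) :
    Tendsto (fun t : ℕ => ∫ x, g x ∂qwMeasure ψ (2 * t)) atTop
      (𝓝 (∫ x, g x ∂konnoLaw (min |Real.cos θ₀| |Real.cos θ₁|) (konnoTilt θ₀ α β))) := by
  have hpos : 0 < min |Real.cos θ₀| |Real.cos θ₁| := lt_min (abs_pos.mpr h₀) (abs_pos.mpr h₁)
  have hA := abs_konnoTilt_mul_min_le_one h₀ θ₁ hαβ
  let μ (t : ℕ) : ProbabilityMeasure ℝ :=
    ⟨qwMeasure ψ (2 * t), isProbabilityMeasure_qwMeasure hevol hinit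
      (alternatingCoin_mem_unitaryGroup θ₀ θ₁) hαβ (2 * t)⟩
  let ν : ProbabilityMeasure ℝ := ⟨_, isProbabilityMeasure_konnoLaw ⟨hpos, hm⟩ hA⟩
  have hμν : Tendsto μ atTop (𝓝 ν) := ProbabilityMeasure.tendsto_of_tendsto_charFun fun ξ => by
    simpa only [μ, ν, ProbabilityMeasure.coe_mk, charFun_konnoLaw h₀ h₁ hm hA] using
      tendsto_charFun_qwMeasure h₀ h₁ hαβ hinit hevol ξ
  exact ProbabilityMeasure.tendsto_iff_forall_integral_tendsto.mp hμν g

lemma cos_ne_zero_of_ne_int_mul_pi_div_two {θ : ℝ} (hθ : ∀ n : ℤ, θ ≠ n * π / 2) :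
    Real.cos θ ≠ 0 :=
  Real.cos_ne_zero_iff.mpr fun n => by exact_mod_cast hθ (2 * n + 1)

lemma abs_cos_lt_one_of_ne_int_mul_pi_div_two {θ : ℝ} (hθ : ∀ n : ℤ, θ ≠ n * π / 2) :
    |Real.cos θ| < 1 := by
  refine (Real.abs_cos_le_one θ).lt_of_ne fun h => ?_
  obtain ⟨n, hn⟩ := Real.sin_eq_zero_iff.mp
    (Real.sin_eq_zero_iff_cos_eq.mpr ((abs_eq zero_le_one).mp h))
  exact hθ (2 * n) (by push_cast; linarith)

theorem two_period_QW_moments_general (h₀ : Real.cos θ₀ ≠ 0) (h₁ : Real.cos θ₁ ≠ 0)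
    (hm : min |Real.cos θ₀| |Real.cos θ₁| < 1) (hαβ : normSq α + normSq β = 1)
    (hinit : QWInit α β ψ) (hevol : QWEvolves (fun t => if Even t then Hcoin θ₀ else Hcoin θ₁) ψ)
    {g : ℝ → ℝ} (hg : Continuous g) :
    Tendsto (fun t : ℕ => ∑' x : ℤ, g (x / (2 * (t : ℝ))) * qwProb ψ (2 * t) x) atTop
      (𝓝 (∫ x in -min |Real.cos θ₀| |Real.cos θ₁|..min |Real.cos θ₀| |Real.cos θ₁|,
        g x * (konnoDensity (min |Real.cos θ₀| |Real.cos θ₁|) x *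
          (1 - konnoTilt θ₀ α β * x)))) := by
  have hpos : 0 < min |Real.cos θ₀| |Real.cos θ₁| := lt_min (abs_pos.mpr h₀) (abs_pos.mpr h₁)
  let clamped : BoundedContinuousFunction ℝ ℝ :=
    (BoundedContinuousFunction.mkOfCompact ⟨fun x : Set.Icc (-1 : ℝ) 1 => g x, by fun_prop⟩)
      |>.compContinuous ⟨Set.projIcc (-1) 1 (by norm_num), continuous_projIcc⟩
  have hclamped : Set.EqOn clamped g (Set.Icc (-1) 1) := fun x hx =>
    congrArg (fun y : Set.Icc (-1 : ℝ) 1 => g y) (Set.projIcc_of_mem (by norm_num) hx)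
  have h := tendsto_integral_qwMeasure h₀ h₁ hm hαβ hinit hevol clamped
  rw [integral_konnoLaw ⟨hpos, hm⟩ (abs_konnoTilt_mul_min_le_one h₀ θ₁ hαβ)] at h
  convert h using 2 with t
  · rw [hevol.integral_qwMeasure_congr hinit hclamped,
      integral_qwMeasure (hevol.finite_support hinit _)]
    push_cast
    simp only [smul_eq_mul, mul_comm]
  · refine intervalIntegral.integral_congr fun x hx => ?_
    rw [Set.uIcc_of_le (by linarith)] at hx
    simp only [hclamped ⟨by linarith [hx.1], hx.2.trans hm.le⟩, smul_eq_mul, mul_comm]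

end TwoPeriodWalk

/-- For the two-period QW with coins `H₀ = H(θ₀)` (even steps), `H₁ = H(θ₁)` (odd steps),
`θ_γ ≠ nπ/2`, `θ₀ ≠ θ₁`, every moment of `X_{2t}/(2t)` converges:
`lim_t E((X_{2t}/2t)^r) = ∫_{-|c_ξ|}^{|c_ξ|} x^r f(x) dx` with
`|c_ξ| = min{|cos θ₀|, |cos θ₁|}`. -/
theorem two_period_QW_moments (θ₀ θ₁ : ℝ)
    (hθ : ∀ n : ℤ, θ₀ ≠ (n : ℝ) * Real.pi / 2 ∧ θ₁ ≠ (n : ℝ) * Real.pi / 2)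
    (hθne : θ₀ ≠ θ₁)
    (α β : ℂ) (hαβ : Complex.normSq α + Complex.normSq β = 1)
    (ψ : ℕ → ℤ → Fin 2 → ℂ)
    (hinit : QWInit α β ψ)
    (hevol : QWEvolves (fun t => if Even t then Hcoin θ₀ else Hcoin θ₁) ψ)
    (r : ℕ) :
    Tendsto
      (fun t : ℕ => ∑' x : ℤ, ((x : ℝ) / (2 * (t : ℝ))) ^ r * qwProb ψ (2 * t) x)
      atTop
      (nhds (∫ x in (-(min |Real.cos θ₀| |Real.cos θ₁|))..(min |Real.cos θ₀| |Real.cos θ₁|),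
        x ^ r * (konnoDensity (min |Real.cos θ₀| |Real.cos θ₁|) x *
          (1 - (Complex.normSq α - Complex.normSq β +
            (α * (starRingEnd ℂ) β + (starRingEnd ℂ) α * β).re *
              (Real.sin θ₀ / Real.cos θ₀)) * x)))) := by
  have h₀ := cos_ne_zero_of_ne_int_mul_pi_div_two fun n => (hθ n).1
  have h₁ := cos_ne_zero_of_ne_int_mul_pi_div_two fun n => (hθ n).2
  have hm : min |Real.cos θ₀| |Real.cos θ₁| < 1 :=
    min_lt_of_left_lt (abs_cos_lt_one_of_ne_int_mul_pi_div_two fun n => (hθ n).1)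
  exact two_period_QW_moments_general h₀ h₁ hm hαβ hinit hevol (continuous_pow r)
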